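/- Let n ≥ 2 be an integer and let c > 1 be a real number. If the unique positive real root α of f(x) = x^n − x − c is an integer, then α = ⌊c^(1/n)⌋ + 1. -/

import Mathlib

/-!
A root `α ≥ 1` of `x ^ p - x - c` satisfies `c = α ^ p - α`, and for `p ≥ 2`
`(α - 1) ^ p ≤ α ^ p - α < α ^ p`. Taking `p`-th roots gives `α - 1 ≤ c ^ (1 / p) < α`, which
determines the floor of `c ^ (1 / p)` when `α` is an integer.
-/

theorem sub_one_rpow_add_self_le_rpow {a p : ℝ} (ha : 1 ≤ a) (hp : 2 ≤ p) :
    (a - 1) ^ p + a ≤ a ^ p := by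
  have ha_sub : 0 ≤ a - 1 := sub_nonneg.2 ha
  have rpow_eq_mul {x : ℝ} (hx : 0 ≤ x) : x ^ p = x * x ^ (p - 1) := by
    rw [← Real.rpow_one_add' hx (by linarith), add_sub_cancel]
  calc
    (a - 1) ^ p + a = (a - 1) * (a - 1) ^ (p - 1) + a := by rw [rpow_eq_mul ha_sub]
    _ ≤ (a - 1) * a ^ (p - 1) + a ^ (p - 1) := by
      gcongr
      · linarith
      · linarith
      · exact Real.self_le_rpow_of_one_le ha (by linarith)
    _ = a ^ p := by rw [rpow_eq_mul (zero_le_one.trans ha)]; ring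

theorem rpow_sub_self_rpow_inv_mem_Ico {a p : ℝ} (ha : 1 ≤ a) (hp : 2 ≤ p) :
    (a ^ p - a) ^ p⁻¹ ∈ Set.Ico (a - 1) a := by
  have ha_pos : 0 < a := zero_lt_one.trans_le ha
  have hp_pos : 0 < p := zero_lt_two.trans_le hp
  have ha_sub : 0 ≤ a - 1 := sub_nonneg.2 ha
  have le_rpow_sub : (a - 1) ^ p ≤ a ^ p - a :=
    le_sub_iff_add_le.2 (sub_one_rpow_add_self_le_rpow ha hp)
  have rpow_sub_nonneg : 0 ≤ a ^ p - a := (Real.rpow_nonneg ha_sub p).trans le_rpow_sub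
  exact ⟨(Real.le_rpow_inv_iff_of_pos ha_sub rpow_sub_nonneg hp_pos).2 le_rpow_sub,
    (Real.rpow_inv_lt_iff_of_pos rpow_sub_nonneg ha_pos.le hp_pos).2 (sub_lt_self _ ha_pos)⟩

theorem integer_root_formula_general {p c α : ℝ} (hp : 2 ≤ p) (hα_pos : 0 < α)
    (hα_root : α ^ p - α - c = 0) (hα_int : ∃ m : ℤ, (m : ℝ) = α) :
    α = ⌊c ^ (1 / p)⌋ + 1 := by
  obtain ⟨m, rfl⟩ := hα_int
  have one_le_m : (1 : ℝ) ≤ m := by exact_mod_cast Int.cast_pos.1 hα_pos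
  obtain rfl : (m : ℝ) ^ p - m = c := sub_eq_zero.1 hα_root
  obtain ⟨sub_one_le_root, root_lt⟩ := rpow_sub_self_rpow_inv_mem_Ico one_le_m hp
  have floor_eq : ⌊((m : ℝ) ^ p - m) ^ (1 / p)⌋ = m - 1 := by
    rw [one_div, Int.floor_eq_iff]
    push_cast
    exact ⟨sub_one_le_root, by rwa [sub_add_cancel]⟩
  rw [floor_eq, Int.cast_sub, Int.cast_one, sub_add_cancel]

/-- For `f(x) = x^n - x - c` with integer `n ≥ 2` and real `c > 1`, if the
unique positive real root `α` is an integer, then `α = ⌊c^(1/n)⌋ + 1`. -/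
theorem integer_root_formula (n : ℕ) (hn : 2 ≤ n) (c : ℝ) (hc : 1 < c) (α : ℝ)
    (hα_pos : 0 < α) (hα_root : α ^ n - α - c = 0)
    (hα_unique : ∀ β : ℝ, 0 < β → β ^ n - β - c = 0 → β = α)
    (hα_int : ∃ m : ℤ, (m : ℝ) = α) :
    α = ⌊c ^ ((1 : ℝ) / n)⌋ + 1 :=
  integer_root_formula_general (Nat.ofNat_le_cast.2 hn) hα_pos
    (by rwa [Real.rpow_natCast]) hα_int
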